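/- The map D squares to zero: D ∘ D = 0 as a P-linear endomorphism of V = R′ ⊕ R′. (This is d² = 0 for the differential graded algebra Q, in terms of the standard monomial decomposition of Q as f + ξ_{h−1}g.) -/

import Mathlib

/-!
Since `D(D(f, g)) = (d(d f) + d(μ g) - μ (d g), d(d g))`, it suffices that `d ∘ d = 0` and that `d`
commutes with left multiplication by `μ`.

Words span `R'`, so `d` satisfies the signed Leibniz rule `d(ξ_a x) = d(ξ_a) x - ξ_a d(x)` for
every `x` (`d_ι_mul`). Put `b_n = Σ_{j+k=n} ξ_j ξ_k`. Applying the rule twice to `b_n x` gives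
`b_n d(x)` plus the terms `Σ b_j ξ_k x - Σ ξ_j b_k x` over `j + k = n`; these cancel, both sums
being `Σ_{i+j+l=n} ξ_i ξ_j ξ_l x` (`sum_bracket_assoc`). Hence `d(b_n x) = b_n d(x)` for
`n ≤ h - 1` (`d_bracket_mul`). The case `n = h - 1` is the claim about `μ`, and the cases
`n ≤ h - 2` give `d(d(ξ_a x)) = ξ_a d(d(x))`, so `d ∘ d = 0` by induction on words (`d_d`).
-/


/- `R' k h = FreeAlgebra (k[τ]) (Fin (h-2))` models the free algebra over
`P = k[τ]` on noncommuting generators `ξ₁, …, ξ_{h−2}`; the generator of index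
`a : Fin (h-2)` represents `ξ_{a+1}`. -/

/-- The free algebra `R′` over `P = k[τ]` on `ξ₁, …, ξ_{h−2}`. -/
abbrev Ralg (k : Type*) [Field k] (h : ℕ) : Type _ :=
  FreeAlgebra (Polynomial k) (Fin (h - 2))

/-- The element `d(ξ_{a+1}) = Σ_{j+k=a+1, j,k≥1} ξ_j ξ_k` of `R′`
(with `ξ_j = ι ⟨j-1⟩`). -/
noncomputable def dgen (k : Type*) [Field k] (h : ℕ) (a : Fin (h - 2)) : Ralg k h :=
  ∑ p ∈ Finset.univ.filter
      (fun p : Fin (h - 2) × Fin (h - 2) => p.1.val + p.2.val + 2 = a.val + 1),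
    FreeAlgebra.ι (Polynomial k) p.1 * FreeAlgebra.ι (Polynomial k) p.2

/-- The basis word of `R′` corresponding to a list of generator indices. -/
noncomputable def word (k : Type*) [Field k] (h : ℕ) (w : List (Fin (h - 2))) :
    Ralg k h :=
  (w.map (FreeAlgebra.ι (Polynomial k))).prod

/-- The prescribed value of the differential `d` on a basis word of `R′`. -/
noncomputable def dWord (k : Type*) [Field k] (h : ℕ) :
    List (Fin (h - 2)) → Ralg k h
  | [] => 0
  | a :: w => dgen k h a * word k h w - FreeAlgebra.ι (Polynomial k) a * dWord k h w

/-- The element `μ = Σ_{j+k=h−1, j,k≥1} ξ_j ξ_k` of `R′`. -/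
noncomputable def muElt (k : Type*) [Field k] (h : ℕ) : Ralg k h :=
  ∑ p ∈ Finset.univ.filter
      (fun p : Fin (h - 2) × Fin (h - 2) => p.1.val + p.2.val + 2 = h - 1),
    FreeAlgebra.ι (Polynomial k) p.1 * FreeAlgebra.ι (Polynomial k) p.2

/-- The quadratic element `Σ ξ_j ξ_k` over `j + k = n`, `1 ≤ j, k ≤ h - 2`; both `d(ξ_n)` and `μ`
(the case `n = h - 1`) are of this form, by definition. -/
noncomputable def bracket (k : Type*) [Field k] (h n : ℕ) : Ralg k h :=
  ∑ p ∈ Finset.univ.filter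
      (fun p : Fin (h - 2) × Fin (h - 2) => p.1.val + p.2.val + 2 = n),
    FreeAlgebra.ι (Polynomial k) p.1 * FreeAlgebra.ι (Polynomial k) p.2

theorem word_cons (k : Type*) [Field k] (h : ℕ) (a : Fin (h - 2)) (w : List (Fin (h - 2))) :
    word k h (a :: w) = FreeAlgebra.ι (Polynomial k) a * word k h w := by
  simp [word]

theorem span_range_word (k : Type*) [Field k] (h : ℕ) :
    Submodule.span (Polynomial k) (Set.range (word k h)) = ⊤ := by
  set N := Submodule.span (Polynomial k) (Set.range (word k h)) with hN
  -- Multiplication by any `x` on the left preserves the span; then evaluate at `1`.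
  have key : ∀ x : Ralg k h, ∀ y ∈ N, x * y ∈ N := by
    intro x
    induction x using FreeAlgebra.induction with
    | grade0 r =>
      intro y hy
      rw [← Algebra.smul_def]
      exact N.smul_mem r hy
    | grade1 a =>
      intro y hy
      induction hy using Submodule.span_induction with
      | mem y hy =>
        obtain ⟨w, rfl⟩ := hy
        exact Submodule.subset_span ⟨a :: w, word_cons k h a w⟩
      | zero => simp
      | add y z _ _ hy hz => rw [mul_add]; exact N.add_mem hy hz
      | smul r y _ hy => rw [mul_smul_comm]; exact N.smul_mem r hy
    | mul a b ha hb => intro y hy; rw [mul_assoc]; exact ha _ (hb y hy)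
    | add a b ha hb => intro y hy; rw [add_mul]; exact N.add_mem (ha y hy) (hb y hy)
  have h1 : (1 : Ralg k h) ∈ N := Submodule.subset_span ⟨[], by simp [word]⟩
  exact eq_top_iff.2 fun x _ => by simpa using key x 1 h1

/-- The signed Leibniz rule for a generator times an arbitrary element. -/
theorem d_ι_mul (k : Type*) [Field k] (h : ℕ)
    (d : Ralg k h →ₗ[Polynomial k] Ralg k h)
    (hd : ∀ w : List (Fin (h - 2)), d (word k h w) = dWord k h w)
    (a : Fin (h - 2)) (x : Ralg k h) :
    d (FreeAlgebra.ι (Polynomial k) a * x) =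
      bracket k h (a.val + 1) * x - FreeAlgebra.ι (Polynomial k) a * d x := by
  have hx : x ∈ Submodule.span (Polynomial k) (Set.range (word k h)) := by
    rw [span_range_word]; trivial
  induction hx using Submodule.span_induction with
  | mem y hy =>
    obtain ⟨w, rfl⟩ := hy
    rw [← word_cons, hd, hd]
    rfl
  | zero => simp
  | add y z _ _ hy hz => rw [mul_add, map_add, hy, hz, map_add, mul_add, mul_add]; abel
  | smul r y _ hy =>
    rw [mul_smul_comm, map_smul, hy, map_smul, mul_smul_comm, mul_smul_comm, smul_sub]

/-- Both sides are the sum of `ξ_i ξ_j ξ_l` over `i + j + l = n`. The bound on `n` ensures that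
the intermediate indices `i + j` and `j + l` stay at most `h - 2`. -/
theorem sum_bracket_assoc (k : Type*) [Field k] (h n : ℕ) (hn : n ≤ h - 1) :
    (∑ p ∈ Finset.univ.filter
      (fun p : Fin (h - 2) × Fin (h - 2) => p.1.val + p.2.val + 2 = n),
      bracket k h (p.1.val + 1) * FreeAlgebra.ι (Polynomial k) p.2) =
    ∑ p ∈ Finset.univ.filter
      (fun p : Fin (h - 2) × Fin (h - 2) => p.1.val + p.2.val + 2 = n),
      FreeAlgebra.ι (Polynomial k) p.1 * bracket k h (p.2.val + 1) := by
  simp only [bracket, Finset.sum_mul, Finset.mul_sum]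
  rw [Finset.sum_sigma', Finset.sum_sigma']
  -- `((i + j, l), (i, j))` corresponds to `((i, j + l), (j, l))`; the `+ 1` is the index shift.
  refine Finset.sum_bij'
    (fun s hs => ⟨(s.2.1, ⟨s.2.2.val + s.1.2.val + 1, ?_⟩), (s.2.2, s.1.2)⟩)
    (fun s hs => ⟨(⟨s.1.1.val + s.2.1.val + 1, ?_⟩, s.2.2), (s.1.1, s.2.1)⟩)
    ?_ ?_ ?_ ?_ ?_
  · simp at hs; omega
  · simp at hs; omega
  · intro s hs; simp at hs ⊢; omega
  · intro s hs; simp at hs ⊢; omega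
  · rintro ⟨⟨⟨a, ha⟩, b⟩, ⟨c, e⟩⟩ hs
    simp at hs ⊢
    omega
  · rintro ⟨⟨a, ⟨b, hb⟩⟩, ⟨c, e⟩⟩ hs
    simp at hs ⊢
    omega
  · intro s hs
    simp only [mul_assoc]

/-- The quadratic elements are cocycles of even degree, so `d` commutes with left multiplication
by them. -/
theorem d_bracket_mul (k : Type*) [Field k] (h : ℕ)
    (d : Ralg k h →ₗ[Polynomial k] Ralg k h)
    (hd : ∀ w : List (Fin (h - 2)), d (word k h w) = dWord k h w)
    (n : ℕ) (hn : n ≤ h - 1) (x : Ralg k h) :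
    d (bracket k h n * x) = bracket k h n * d x := by
  have hι := d_ι_mul k h d hd
  have key := congrArg (· * x) (sum_bracket_assoc k h n hn)
  simp only [Finset.sum_mul] at key
  have e : ∀ p : Fin (h - 2) × Fin (h - 2),
      d (FreeAlgebra.ι (Polynomial k) p.1 * FreeAlgebra.ι (Polynomial k) p.2 * x) =
        bracket k h (p.1.val + 1) * FreeAlgebra.ι (Polynomial k) p.2 * x -
        FreeAlgebra.ι (Polynomial k) p.1 * bracket k h (p.2.val + 1) * x +
        FreeAlgebra.ι (Polynomial k) p.1 * FreeAlgebra.ι (Polynomial k) p.2 * d x := by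
    intro p
    rw [mul_assoc, hι, hι]
    rw [mul_sub]
    simp only [mul_assoc]
    abel
  rw [bracket, Finset.sum_mul, Finset.sum_mul, map_sum, Finset.sum_congr rfl fun p _ => e p,
    Finset.sum_add_distrib, Finset.sum_sub_distrib, key, sub_self, zero_add]

theorem d_d (k : Type*) [Field k] (h : ℕ)
    (d : Ralg k h →ₗ[Polynomial k] Ralg k h)
    (hd : ∀ w : List (Fin (h - 2)), d (word k h w) = dWord k h w) (x : Ralg k h) :
    d (d x) = 0 := by
  have hw : ∀ w, d (d (word k h w)) = 0 := by
    intro w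
    induction w with
    | nil => rw [hd]; simp [dWord]
    | cons a w ih =>
      have ha : a.val + 1 ≤ h - 1 := by omega
      rw [word_cons, d_ι_mul k h d hd, map_sub, d_bracket_mul k h d hd _ ha,
        d_ι_mul k h d hd, ih]
      simp
  have hx : x ∈ Submodule.span (Polynomial k) (Set.range (word k h)) := by
    rw [span_range_word]; trivial
  induction hx using Submodule.span_induction with
  | mem y hy => obtain ⟨w, rfl⟩ := hy; exact hw w
  | zero => simp
  | add y z _ _ hy hz => rw [map_add, map_add, hy, hz, add_zero]
  | smul r y _ hy => rw [map_smul, map_smul, hy, smul_zero]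

/-- with `V = R′ ⊕ R′` (where `(f, g)` models `f + ξ_{h−1} g` in `Q`)
and `D(f, g) = (d f + μ g, −d g)`, the `P`-linear map `D` squares to zero. -/
theorem D_comp_D_eq_zero (k : Type*) [Field k] (h : ℕ) (hh : 3 ≤ h)
    (d : Ralg k h →ₗ[Polynomial k] Ralg k h)
    (hd : ∀ w : List (Fin (h - 2)), d (word k h w) = dWord k h w)
    (D : Ralg k h × Ralg k h →ₗ[Polynomial k] Ralg k h × Ralg k h)
    (hD : ∀ f g : Ralg k h, D (f, g) = (d f + muElt k h * g, -d g)) :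
    D ∘ₗ D = 0 := by
  have hbr := d_bracket_mul k h d hd
  have hdd := d_d k h d hd
  apply LinearMap.ext
  rintro ⟨f, g⟩
  have hmu : d (muElt k h * g) = muElt k h * d g := hbr (h - 1) le_rfl g
  -- `mul_neg` does not unify with the `Neg` instance that is found on `FreeAlgebra`.
  have hneg : muElt k h * -d g = -(muElt k h * d g) :=
    eq_neg_of_add_eq_zero_left (by rw [← mul_add, neg_add_cancel, mul_zero])
  simp [hD, hmu, hdd, hneg]
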